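/- arXiv:1906.01898 — 2 statements merged into one kernel-verified Lean document; each statement's English description precedes it below -/
import Mathlib

section
/- Let (Ω,T) be a subshift over a finite alphabet and ω ∈ Ω. Assume there is a sequence (w_k) of finite words with |w_k| → ∞ such that for each k the threefold concatenation w_k w_k w_k occurs in ω at position −|w_k| or at position −2|w_k| (i.e., ω = ⋯w_k|w_k w_k⋯ or ω = ⋯w_k w_k|w_k⋯ around the origin). Then for every locally constant A : Ω → SL(2,ℝ) and every v ∈ ℝ²∖{0}, it is not the case that ‖A(n,ω)v‖ → 0 as n → +∞ and ‖A(n,ω)v‖ → 0 as n → −∞; in particular, at most one of limsup_{n→+∞} (1/n) log‖A(n,ω)v‖ and limsup_{n→−∞} (1/|n|) log‖A(n,ω)v‖ is negative. -/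
open Filter Topology MeasureTheory

noncomputable section

abbrev SL2 := Matrix.SpecialLinearGroup (Fin 2) ℝ

/-- Operator norm of a 2×2 real matrix acting on Euclidean ℝ². -/
def matNorm (M : Matrix (Fin 2) (Fin 2) ℝ) : ℝ :=
  ‖LinearMap.toContinuousLinearMap (Matrix.toEuclideanLin M)‖

/-- Norm of an element of SL(2,ℝ). -/
def slNorm (M : SL2) : ℝ := matNorm (M : Matrix (Fin 2) (Fin 2) ℝ)

/-- Action of an SL(2,ℝ) matrix on a euclidean vector. -/
def slAct (M : SL2) (v : EuclideanSpace ℝ (Fin 2)) : EuclideanSpace ℝ (Fin 2) :=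
  Matrix.toEuclideanLin (M : Matrix (Fin 2) (Fin 2) ℝ) v

variable {𝒜 : Type*}

/-- The shift by `k` on two-sided sequences; `shift 1` is the left shift `T`. -/
def shift (k : ℤ) (ω : ℤ → 𝒜) : ℤ → 𝒜 := fun n => ω (n + k)

/-- `Ω ⊆ 𝒜^ℤ` is a subshift: nonempty, closed, invariant under the shift and its inverse. -/
structure IsSubshift [TopologicalSpace 𝒜] (Ω : Set (ℤ → 𝒜)) : Prop where
  nonempty : Ω.Nonempty
  closed : IsClosed Ω
  shift_mem : ∀ ω ∈ Ω, shift 1 ω ∈ Ω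
  shift_neg_mem : ∀ ω ∈ Ω, shift (-1) ω ∈ Ω

/-- The word `ω(k) ω(k+1) ⋯ ω(k+n-1)`. -/
def word (ω : ℤ → 𝒜) (k : ℤ) (n : ℕ) : List 𝒜 := (List.range n).map fun i => ω (k + i)

/-- `v` occurs in `ω` at position `k`. -/
def occursAt (v : List 𝒜) (ω : ℤ → 𝒜) (k : ℤ) : Prop := v = word ω k v.length

/-- The words of length `n` occurring in elements of `Ω`. -/
def WordsN (Ω : Set (ℤ → 𝒜)) (n : ℕ) : Set (List 𝒜) :=
  {v | ∃ ω ∈ Ω, ∃ k : ℤ, v = word ω k n}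

/-- The (nonempty) finite words occurring in elements of `Ω`. -/
def Words (Ω : Set (ℤ → 𝒜)) : Set (List 𝒜) :=
  {v | 1 ≤ v.length ∧ v ∈ WordsN Ω v.length}

/-- `A` is locally constant on `Ω`: its value depends only on a finite window around 0. -/
def LocConstOn (Ω : Set (ℤ → 𝒜)) {β : Type*} (A : (ℤ → 𝒜) → β) : Prop :=
  ∃ N : ℕ, ∀ ω ∈ Ω, ∀ ρ ∈ Ω, (∀ i : ℤ, |i| ≤ (N : ℤ) → ω i = ρ i) → A ω = A ρ

/-- The positive part of the cocycle: `cocycleP A n ω = A(T^{n-1}ω) ⋯ A(ω)`. -/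
def cocycleP (A : (ℤ → 𝒜) → SL2) : ℕ → (ℤ → 𝒜) → SL2
  | 0, _ => 1
  | n + 1, ω => A (shift n ω) * cocycleP A n ω

/-- The full cocycle over the shift, `n ∈ ℤ`. -/
def cocycle (A : (ℤ → 𝒜) → SL2) (n : ℤ) (ω : ℤ → 𝒜) : SL2 :=
  if 0 ≤ n then cocycleP A n.toNat ω else (cocycleP A (-n).toNat (shift n ω))⁻¹

/-- `A` is uniform on `Ω`: `(1/n) log‖A(n,ω)‖` converges uniformly on `Ω`. -/
def IsUniform (Ω : Set (ℤ → 𝒜)) (A : (ℤ → 𝒜) → SL2) : Prop :=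
  ∃ Λ : ℝ, TendstoUniformlyOn
    (fun (n : ℕ) (ω : ℤ → 𝒜) => Real.log (slNorm (cocycle A n ω)) / n)
    (fun _ => Λ) atTop Ω

/-- The number of occurrences of `v` in `ω(1)⋯ω(n)`. -/
def occCount (v : List 𝒜) (ω : ℤ → 𝒜) (n : ℕ) : ℕ :=
  Set.ncard {k : ℤ | 1 ≤ k ∧ k + v.length ≤ (n : ℤ) + 1 ∧ occursAt v ω k}

/-- Uniform existence of word frequencies (unique ergodicity). -/
def UniformWordFreq (Ω : Set (ℤ → 𝒜)) : Prop :=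
  ∀ v ∈ Words Ω, ∃ ν : ℝ, TendstoUniformlyOn
    (fun (n : ℕ) (ω : ℤ → 𝒜) => (occCount v ω n : ℝ) / n) (fun _ => ν) atTop Ω

/-- Minimality: every orbit is dense in `Ω`. -/
def IsMinimalSubshift [TopologicalSpace 𝒜] (Ω : Set (ℤ → 𝒜)) : Prop :=
  ∀ ω ∈ Ω, ∀ ρ ∈ Ω, ρ ∈ closure {σ : ℤ → 𝒜 | ∃ k : ℤ, σ = shift k ω}

/-- Condition (α): for all large `n`, the words of length `n` of `Ω` are exactly the
words `lead j (-k+1) ⋯ lead j (-k+n)`, `0 ≤ k ≤ n`, of the leading words. -/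
def CondAlpha (Ω : Set (ℤ → 𝒜)) {r : ℕ} (lead : Fin r → (ℤ → 𝒜)) : Prop :=
  (∀ j, lead j ∈ Ω) ∧ ∃ N : ℕ, ∀ n : ℕ, N ≤ n →
    WordsN Ω n = {v | ∃ j : Fin r, ∃ k : ℕ, k ≤ n ∧ v = word (lead j) (1 - (k : ℤ)) n}

/-- Condition (β): for every locally constant cocycle the Lyapunov limits along the
leading words exist in both time directions and all have the same value. -/
def CondBeta (Ω : Set (ℤ → 𝒜)) {r : ℕ} (lead : Fin r → (ℤ → 𝒜)) : Prop :=
  ∀ A : (ℤ → 𝒜) → SL2, LocConstOn Ω A → ∃ Λ : ℝ, ∀ j : Fin r,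
    Tendsto (fun n : ℕ => Real.log (slNorm (cocycle A n (lead j))) / n) atTop (𝓝 Λ) ∧
    Tendsto (fun n : ℕ => Real.log (slNorm (cocycle A (-(n : ℤ)) (lead j))) / n) atTop (𝓝 Λ)

/-- Condition (γ): along the leading words, for every locally constant cocycle and every
nonzero vector, at most one of the two one-sided exponents is negative. -/
def CondGamma (Ω : Set (ℤ → 𝒜)) {r : ℕ} (lead : Fin r → (ℤ → 𝒜)) : Prop :=
  ∀ A : (ℤ → 𝒜) → SL2, LocConstOn Ω A → ∀ j : Fin r,
    ∀ v : EuclideanSpace ℝ (Fin 2), v ≠ 0 →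
    ¬ (limsup (fun n : ℕ => Real.log ‖slAct (cocycle A n (lead j)) v‖ / n) atTop < 0 ∧
       limsup (fun n : ℕ => Real.log ‖slAct (cocycle A (-(n : ℤ)) (lead j)) v‖ / n) atTop < 0)

/-- The leading sequence condition (LSC). -/
def SatisfiesLSC (Ω : Set (ℤ → 𝒜)) : Prop :=
  ∃ (r : ℕ) (lead : Fin r → (ℤ → 𝒜)), CondAlpha Ω lead ∧ CondBeta Ω lead ∧ CondGamma Ω lead

/-- `F` is subadditive on the words of `Ω`. -/
def SubadditiveOn (Ω : Set (ℤ → 𝒜)) (F : List 𝒜 → ℝ) : Prop :=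
  ∀ x y : List 𝒜, x ∈ Words Ω → y ∈ Words Ω → (x ++ y) ∈ Words Ω → F (x ++ y) ≤ F x + F y

/-- `Fb` is the asymptotic mean `lim_n max { F x / n : x ∈ W(Ω)_n }` of `F`. -/
def IsAsympMean (Ω : Set (ℤ → 𝒜)) (F : List 𝒜 → ℝ) (Fb : ℝ) : Prop :=
  Tendsto (fun n : ℕ => sSup ((fun x => F x / n) '' WordsN Ω n)) atTop (𝓝 Fb)

/-- Maximal number of pairwise disjoint occurrences of `v` in `ω(1)⋯ω(n)`. -/
def disjCount (v : List 𝒜) (ω : ℤ → 𝒜) (n : ℕ) : ℕ :=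
  sSup {m : ℕ | ∃ S : Finset ℤ, S.card = m ∧
    (∀ k ∈ S, 1 ≤ k ∧ k + v.length ≤ (n : ℤ) + 1 ∧ occursAt v ω k) ∧
    (∀ k ∈ S, ∀ l ∈ S, k ≠ l → (v.length : ℤ) ≤ |k - l|)}

/-- Condition (PQ) for the one-sided word `p(1)p(2)⋯`. -/
def CondPQ (p : ℤ → 𝒜) : Prop :=
  ∃ c : ℝ, 0 < c ∧ ∀ m : ℕ, 1 ≤ m →
    c ≤ liminf (fun n : ℕ => (m : ℝ) / n * disjCount (word p 1 m) p n) atTop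

/-- ℓ²(ℤ) over the reals. -/
abbrev Ell2Z : Type := lp (fun _ : ℤ => ℝ) 2

/-- `H` acts as the Jacobi operator with coefficients `f, g` at `ω`. -/
def IsJacobiAt (f g : (ℤ → 𝒜) → ℝ) (ω : ℤ → 𝒜) (H : Ell2Z →L[ℝ] Ell2Z) : Prop :=
  ∀ u : Ell2Z, ∀ n : ℤ,
    (H u : ∀ _ : ℤ, ℝ) n =
      f (shift n ω) * (u : ∀ _ : ℤ, ℝ) (n - 1) + f (shift (n + 1) ω) * (u : ∀ _ : ℤ, ℝ) (n + 1)
        + g (shift n ω) * (u : ∀ _ : ℤ, ℝ) n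

/-- The pair `(f,g)` is periodic on `Ω`. -/
def PeriodicPair (Ω : Set (ℤ → 𝒜)) (f g : (ℤ → 𝒜) → ℝ) : Prop :=
  ∃ P : ℕ, 1 ≤ P ∧ ∀ ω ∈ Ω, f (shift (P : ℤ) ω) = f ω ∧ g (shift (P : ℤ) ω) = g ω

/-- `S ⊆ ℝ` is a Cantor set of Lebesgue measure zero: compact, empty interior,
no isolated points, Lebesgue measure zero. -/
def IsMeasureZeroCantor (S : Set ℝ) : Prop :=
  IsCompact S ∧ interior S = ∅ ∧ Perfect S ∧ volume S = 0

/-- `n` copies of `x` separated by `n-1` copies of the letter `l`. -/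
def sepJoin (x : List 𝒜) (l : 𝒜) (m : ℕ) : List 𝒜 :=
  (List.replicate (m - 1) (x ++ [l])).flatten ++ x

/-- `Blk a nseq (k+1)` is the block `block(k)` of the simple Toeplitz construction
(with `Blk a nseq 0 = block(-1) = ε`). -/
def Blk (a : ℕ → 𝒜) (nseq : ℕ → ℕ) : ℕ → List 𝒜
  | 0 => []
  | k + 1 => sepJoin (Blk a nseq k) (a k) (nseq k)

/-- `p(1)p(2)⋯` is the one-sided word `block(∞)`: every block is a prefix of it. -/
def IsBlockInf (a : ℕ → 𝒜) (nseq : ℕ → ℕ) (p : ℤ → 𝒜) : Prop :=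
  ∀ k : ℕ, word p 1 (Blk a nseq k).length = Blk a nseq k

/-- The simple Toeplitz subshift generated by `block(∞) = p(1)p(2)⋯`: all two-sided
sequences whose finite subwords all occur in `block(∞)`. -/
def toeplitzΩ (p : ℤ → 𝒜) : Set (ℤ → 𝒜) :=
  {ω | ∀ (i : ℤ) (n : ℕ), ∃ l : ℤ, 1 ≤ l ∧ word ω i n = word p l n}

/-- The eventual alphabet: letters occurring infinitely often in `(a_k)`. -/
def EvAlph (a : ℕ → 𝒜) : Set 𝒜 := {x | ∀ K : ℕ, ∃ k, K ≤ k ∧ a k = x}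

/-- The leading word `p^R v | p`: equals `p(n+1)` for `n ≥ 0`, carries the word `v` on
positions `-|v|, …, -1`, and equals `p(-(n+|v|))` for `n < -|v|`. -/
def leadWordGen (p : ℤ → 𝒜) (v : List 𝒜) : ℤ → 𝒜 := fun n =>
  if 0 ≤ n then p (n + 1)
  else if -(v.length : ℤ) ≤ n then v.getD (n + v.length).toNat (p 1)
  else p (-(n + v.length))

/-- The Gauss map. -/
def gaussMap (x : ℝ) : ℝ := 1 / x - ⌊1 / x⌋

/-- `cfSeq α n` is the continued fraction coefficient `a_{n+1}` of `α`. -/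
def cfSeq (α : ℝ) (n : ℕ) : ℕ := ⌊1 / (gaussMap^[n] α)⌋₊

/-- The standard Sturmian words: `sturmW α (n+1) = s_n`, `sturmW α 0 = s_{-1} = 1`,
`sturmW α 1 = s_0 = 0`, `s_1 = s_0^{a_1 - 1} s_{-1}`, `s_n = s_{n-1}^{a_n} s_{n-2}`. -/
def sturmW (α : ℝ) : ℕ → List (Fin 2)
  | 0 => [1]
  | 1 => [0]
  | 2 => List.replicate (cfSeq α 0 - 1) (0 : Fin 2) ++ [1]
  | n + 3 => (List.replicate (cfSeq α (n + 1)) (sturmW α (n + 2))).flatten ++ sturmW α (n + 1)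

/-- The Sturmian subshift with rotation number `α`: all two-sided sequences whose finite
subwords occur in some `s_n`. -/
def sturmΩ (α : ℝ) : Set (ℤ → Fin 2) :=
  {ω | ∀ (i : ℤ) (n : ℕ), ∃ m : ℕ, word ω i n <:+: sturmW α m}

/-- The positive cocycle of a map `A` over a transformation `T`:
`cocycleH T A n ω = A(T^{n-1}ω) ⋯ A(ω)`. -/
def cocycleH {Ω : Type*} (T : Ω → Ω) (A : Ω → SL2) : ℕ → Ω → SL2
  | 0, _ => 1
  | n + 1, ω => A (T^[n] ω) * cocycleH T A n ω

end

/-!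
Gordon's three-block argument. If the word read by `ω` has period `p` on a window of length about
`3 p` around the origin, then so do the matrices of the cocycle, up to the width of the window on
which `A` depends. The monodromies `X` over one period are then conjugate along the window, hence
share their trace `t`, and Cayley–Hamilton in `SL(2)`, `X ^ 2 + 1 = t X`, becomes
`u (s + 2 p) + u s = t u (s + p)` for every trajectory `u` and every `s` in the window.

Suppose `u → 0` at `±∞`. The instance with the coefficient `t` on a bounded index forces `t → 0` as
`p → ∞`, and then the instance with a bounded index at one end forces `u` to vanish there. This
contradicts invertibility of the cocycle.
-/

/-! ### Two-sided sequences with a three-term recurrence -/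

section Recurrence

variable {𝕜 E : Type*} [NormedField 𝕜] [NormedAddCommGroup E] [NormedSpace 𝕜 E]

theorem tendsto_zero_of_tendsto_smul_const {ι : Type*} {l : Filter ι} {t : ι → 𝕜} {y : E}
    (hy : y ≠ 0) (h : Tendsto (fun i => t i • y) l (𝓝 0)) : Tendsto t l (𝓝 0) := by
  rw [tendsto_zero_iff_norm_tendsto_zero] at h ⊢
  simpa [norm_smul, hy] using h.mul_const ‖y‖⁻¹

variable (𝕜) in
/-- The sequence `u` satisfies, with step `p` and a common coefficient `t`, a three-term recurrence
whose left end is `a` and one whose midpoint is `b`. These are the two recurrences that a cube of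
words of length `p` around the origin provides. -/
def HasGordonRecurrence (u : ℤ → E) (a b p : ℤ) : Prop :=
  ∃ t : 𝕜, u (a + 2 * p) + u a = t • u (a + p) ∧ u (b + p) + u (b - p) = t • u b

theorem eq_zero_or_eq_zero_of_frequently_hasGordonRecurrence {u : ℤ → E}
    (h_top : Tendsto u atTop (𝓝 0)) (h_bot : Tendsto u atBot (𝓝 0)) {a b : ℤ}
    (h : ∃ᶠ p in atTop, HasGordonRecurrence 𝕜 u a b p) : u a = 0 ∨ u b = 0 := by
  rw [or_iff_not_imp_right]
  intro hb
  obtain ⟨p, hp, h_rec⟩ := exists_seq_forall_of_frequently h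
  choose t ht_a ht_b using h_rec
  have h_add (c : ℤ) : Tendsto (fun i => u (c + p i)) atTop (𝓝 0) :=
    h_top.comp (tendsto_atTop_add_const_left _ c hp)
  have h_add_two : Tendsto (fun i => u (a + 2 * p i)) atTop (𝓝 0) :=
    h_top.comp (tendsto_atTop_add_const_left _ a (hp.const_mul_atTop' two_pos))
  have h_sub : Tendsto (fun i => u (b - p i)) atTop (𝓝 0) :=
    h_bot.comp (tendsto_atBot_add_const_left _ b (tendsto_neg_atTop_atBot.comp hp))
  have ht : Tendsto t atTop (𝓝 0) := by
    apply tendsto_zero_of_tendsto_smul_const hb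
    simpa only [← ht_b, add_zero] using (h_add b).add h_sub
  have h_const : Tendsto (fun _ : ℕ => u a) atTop (𝓝 0) := by
    simpa only [← ht_a, add_sub_cancel_left, smul_zero, sub_zero] using
      (ht.smul (h_add a)).sub h_add_two
  exact tendsto_nhds_unique tendsto_const_nhds h_const

end Recurrence

/-! ### The cocycle and its trajectories -/

theorem sq_add_one_eq_trace_smul {R : Type*} [CommRing R]
    (X : Matrix.SpecialLinearGroup (Fin 2) R) :
    (X : Matrix (Fin 2) (Fin 2) R) ^ 2 + 1 = (X : Matrix (Fin 2) (Fin 2) R).trace • X.1 := by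
  nontriviality R
  have h := Matrix.aeval_self_charpoly (X : Matrix (Fin 2) (Fin 2) R)
  simp only [Matrix.charpoly_fin_two, Matrix.SpecialLinearGroup.det_coe, map_one, map_add, map_sub,
    map_mul, map_pow, Polynomial.aeval_X, Polynomial.aeval_C, ← Algebra.smul_def,
    sub_add_eq_add_sub] at h
  exact sub_eq_zero.mp h

theorem slAct_mul (X Y : SL2) (v : EuclideanSpace ℝ (Fin 2)) :
    slAct (X * Y) v = slAct X (slAct Y v) := by
  simp [slAct]

theorem slAct_ne_zero (X : SL2) {v : EuclideanSpace ℝ (Fin 2)} (hv : v ≠ 0) : slAct X v ≠ 0 := by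
  intro h
  have h_inv : slAct X⁻¹ (slAct X v) = v := by
    rw [← slAct_mul, inv_mul_cancel]
    simp [slAct]
  exact hv (by rw [← h_inv, h, slAct, map_zero])

theorem slAct_sq_add (X : SL2) (v : EuclideanSpace ℝ (Fin 2)) :
    slAct (X ^ 2) v + v = (X : Matrix (Fin 2) (Fin 2) ℝ).trace • slAct X v := by
  have h := congrArg (fun M => Matrix.toEuclideanLin M v) (sq_add_one_eq_trace_smul X)
  simpa [slAct] using h

section Shift

variable {𝒜 : Type*}

theorem shift_zero (ω : ℤ → 𝒜) : shift 0 ω = ω := by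
  funext i
  simp only [shift, add_zero]

theorem shift_shift (m n : ℤ) (ω : ℤ → 𝒜) : shift m (shift n ω) = shift (m + n) ω := by
  funext i
  simp only [shift, add_assoc]

theorem IsSubshift.shift_int_mem [TopologicalSpace 𝒜] {Ω : Set (ℤ → 𝒜)} (hΩ : IsSubshift Ω)
    {ω : ℤ → 𝒜} (hω : ω ∈ Ω) (n : ℤ) : shift n ω ∈ Ω := by
  induction n using Int.induction_on with
  | zero => rwa [shift_zero]
  | succ n ih => simpa only [shift_shift, add_comm] using hΩ.shift_mem _ ih
  | pred n ih => simpa only [shift_shift, neg_add_eq_sub] using hΩ.shift_neg_mem _ ih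

theorem LocConstOn.mono {Ω Ω' : Set (ℤ → 𝒜)} {β : Type*} {A : (ℤ → 𝒜) → β} (hA : LocConstOn Ω' A)
    (h : Ω ⊆ Ω') : LocConstOn Ω A :=
  hA.imp fun _ hN ω hω ρ hρ => hN ω (h hω) ρ (h hρ)

end Shift

section Cocycle

variable {𝒜 : Type*} (A : (ℤ → 𝒜) → SL2)

theorem cocycle_zero (ω : ℤ → 𝒜) : cocycle A 0 ω = 1 :=
  rfl

theorem cocycle_natCast (n : ℕ) (ω : ℤ → 𝒜) : cocycle A n ω = cocycleP A n ω := by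
  simp [cocycle]

theorem cocycle_neg_natCast (n : ℕ) (ω : ℤ → 𝒜) :
    cocycle A (-n) ω = (cocycleP A n (shift (-n) ω))⁻¹ := by
  cases n with
  | zero => simp [cocycle, cocycleP]
  | succ n => simp [cocycle, show ¬ (0 : ℤ) ≤ -1 + -n by lia]

theorem cocycleP_succ_right (n : ℕ) (ω : ℤ → 𝒜) :
    cocycleP A (n + 1) ω = cocycleP A n (shift 1 ω) * A ω := by
  induction n with
  | zero => simp [cocycleP, shift_zero]
  | succ n ih =>
    rw [cocycleP, ih, cocycleP, shift_shift, mul_assoc, Nat.cast_succ]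

theorem cocycle_add_one (n : ℤ) (ω : ℤ → 𝒜) :
    cocycle A (n + 1) ω = A (shift n ω) * cocycle A n ω := by
  obtain ⟨n, rfl | rfl⟩ := n.eq_nat_or_neg
  · rw [← Nat.cast_succ, cocycle_natCast, cocycle_natCast, cocycleP]
  · cases n with
    | zero => simp [cocycle, cocycleP]
    | succ n =>
      rw [cocycle_neg_natCast, cocycleP_succ_right, shift_shift, mul_inv_rev, mul_inv_cancel_left,
        Nat.cast_succ, neg_add_rev, add_neg_cancel_left, neg_add_cancel_comm, cocycle_neg_natCast]

theorem cocycle_add (m n : ℤ) (ω : ℤ → 𝒜) :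
    cocycle A (m + n) ω = cocycle A m (shift n ω) * cocycle A n ω := by
  induction m using Int.induction_on with
  | zero => rw [zero_add, cocycle_zero, one_mul]
  | succ m ih =>
    rw [add_right_comm, cocycle_add_one, ih, cocycle_add_one, shift_shift, mul_assoc]
  | pred m ih =>
    apply mul_left_cancel (a := A (shift (-m - 1 + n) ω))
    rw [← cocycle_add_one, ← mul_assoc, ← shift_shift, ← cocycle_add_one, sub_add_cancel, ← ih]
    congr 1
    ring

/-- The orbit `n ↦ A(n, ω) v` of a vector `v` under the cocycle. -/
noncomputable def trajectory (ω : ℤ → 𝒜) (v : EuclideanSpace ℝ (Fin 2)) (n : ℤ) :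
    EuclideanSpace ℝ (Fin 2) :=
  slAct (cocycle A n ω) v

variable {A}

theorem cocycle_congr {σ τ : ℤ → 𝒜} {n : ℕ}
    (h : ∀ j : ℤ, 0 ≤ j → j < n → A (shift j σ) = A (shift j τ)) :
    cocycle A n σ = cocycle A n τ := by
  induction n with
  | zero => rw [Nat.cast_zero, cocycle_zero, cocycle_zero]
  | succ n ih =>
    rw [Nat.cast_succ, cocycle_add_one, cocycle_add_one, h n (by lia) (by lia),
      ih fun j hj hjn => h j hj (by lia)]

variable {ω : ℤ → 𝒜} {a b p s : ℤ}

theorem cocycle_shift_eq_of_periodic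
    (h : ∀ j, a ≤ j → j < b → A (shift (j + p) ω) = A (shift j ω))
    {n : ℕ} (ha : a ≤ s) (hb : s + n ≤ b) :
    cocycle A n (shift (s + p) ω) = cocycle A n (shift s ω) := by
  refine cocycle_congr fun j hj hjn => ?_
  rw [shift_shift, shift_shift, ← add_assoc, h (j + s) (by lia) (by lia)]

-- Both ways of splitting `cocycle A (p + n)` at `a` conjugate one monodromy to the other.
theorem trace_cocycle_shift_eq_of_periodic
    (h : ∀ j, a ≤ j → j < b → A (shift (j + p) ω) = A (shift j ω)) (ha : a ≤ s) (hb : s ≤ b) :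
    (cocycle A p (shift s ω)).1.trace = (cocycle A p (shift a ω)).1.trace := by
  obtain ⟨n, rfl⟩ := Int.le.dest ha
  set X := cocycle A n (shift a ω)
  have h_comm : cocycle A p (shift (a + n) ω) * X = X * cocycle A p (shift a ω) := by
    rw [add_comm a, ← shift_shift, ← cocycle_add, add_comm p, cocycle_add, shift_shift, add_comm p,
      cocycle_shift_eq_of_periodic h le_rfl hb]
  rw [eq_mul_inv_of_mul_eq h_comm, Matrix.SpecialLinearGroup.coe_mul, Matrix.trace_mul_comm,
    ← Matrix.SpecialLinearGroup.coe_mul, inv_mul_cancel_left]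

variable {v : EuclideanSpace ℝ (Fin 2)}

theorem trajectory_add (m n : ℤ) :
    trajectory A ω v (m + n) = slAct (cocycle A n (shift m ω)) (trajectory A ω v m) := by
  rw [trajectory, add_comm, cocycle_add, slAct_mul, trajectory]

theorem exists_trajectory_three_term_of_periodic {p : ℕ}
    (h : ∀ j, a ≤ j → j < b → A (shift (j + p) ω) = A (shift j ω)) :
    ∃ t : ℝ, ∀ s, a ≤ s → s + p ≤ b →
      trajectory A ω v (s + 2 * p) + trajectory A ω v s = t • trajectory A ω v (s + p) := by
  refine ⟨(cocycle A p (shift a ω)).1.trace, fun s ha hb => ?_⟩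
  have h_sq : cocycle A (2 * p) (shift s ω) = cocycle A p (shift s ω) ^ 2 := by
    rw [two_mul, cocycle_add, shift_shift, add_comm (p : ℤ),
      cocycle_shift_eq_of_periodic h ha hb, sq]
  rw [trajectory_add, trajectory_add, h_sq, slAct_sq_add,
    trace_cocycle_shift_eq_of_periodic h ha (by lia)]

end Cocycle

/-! ### Cubes around the origin -/

section Cubes

variable {𝒜 : Type*} {ω : ℤ → 𝒜} {k : ℤ}

-- `word` maps over `List.range n` coerced to `List ℤ`, a coercion that unfolds to a monadic bind.
theorem word_eq_map_range (ω : ℤ → 𝒜) (k : ℤ) (n : ℕ) :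
    word ω k n = (List.range n).map fun i : ℕ => ω (k + i) := by
  simp [word, List.flatMap_assoc, List.map_eq_flatMap]

theorem occursAt.getElem?_eq {x : List 𝒜} (h : occursAt x ω k) {i : ℕ} (hi : i < x.length) :
    x[i]? = some (ω (k + i)) := by
  rw [occursAt, word_eq_map_range] at h
  rw [h, List.getElem?_map, List.getElem?_range hi, Option.map_some]

theorem occursAt.apply_add_eq_of_drop_prefix {x : List 𝒜} {p : ℕ} (h : occursAt x ω k)
    (hx : x.drop p <+: x) {j : ℤ} (hj : k ≤ j) (hjp : j + p < k + x.length) :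
    ω (j + p) = ω j := by
  obtain ⟨i, rfl⟩ := Int.le.dest hj
  have h_period : x[p + i]? = x[i]? := by
    rw [← List.getElem?_drop]
    have h_lt : i < (x.drop p).length := by rw [List.length_drop]; lia
    rw [List.getElem?_eq_getElem h_lt, List.prefix_iff_getElem?.mp hx i h_lt]
  rw [h.getElem?_eq (by lia), h.getElem?_eq (by lia), Option.some_inj] at h_period
  rw [← h_period]
  congr 1
  push_cast
  ring

theorem occursAt.apply_add_length_eq {x : List 𝒜} (h : occursAt (x ++ x ++ x) ω k) {j : ℤ}
    (hj : k ≤ j) (hjx : j < k + 2 * x.length) : ω (j + x.length) = ω j :=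
  h.apply_add_eq_of_drop_prefix (by simp) hj (by simp; lia)

/-- The cube `x x x` occurs in `ω` as `⋯ x | x x ⋯` or as `⋯ x x | x ⋯`, where `|` marks the
origin. -/
def HasCubeAroundOrigin (ω : ℤ → 𝒜) (x : List 𝒜) : Prop :=
  occursAt (x ++ x ++ x) ω (-(x.length : ℤ)) ∨ occursAt (x ++ x ++ x) ω (-(2 * (x.length : ℤ)))

variable {A : (ℤ → 𝒜) → SL2} {v : EuclideanSpace ℝ (Fin 2)}

theorem LocConstOn.exists_forall_apply_shift_add_length_eq {β : Type*} {f : (ℤ → 𝒜) → β}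
    (hf : LocConstOn (Set.range fun n => shift n ω) f) :
    ∃ N : ℕ, ∀ (x : List 𝒜) (k : ℤ), occursAt (x ++ x ++ x) ω k →
      ∀ j : ℤ, k + N ≤ j → j < k + 2 * x.length - N →
        f (shift (j + x.length) ω) = f (shift j ω) := by
  refine hf.imp fun N hN x k hx j hj hjx => hN _ ⟨_, rfl⟩ _ ⟨_, rfl⟩ fun i hi => ?_
  rw [abs_le] at hi
  simpa only [shift, add_assoc] using
    hx.apply_add_length_eq (j := i + j) (by lia) (by lia)

-- Reversing time turns `⋯ x x | x ⋯` into `⋯ x | x x ⋯`.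
theorem LocConstOn.exists_forall_hasGordonRecurrence
    (hA : LocConstOn (Set.range fun n => shift n ω) A) :
    ∃ N : ℤ, ∀ x : List 𝒜, 2 * N ≤ x.length → HasCubeAroundOrigin ω x →
      HasGordonRecurrence ℝ (trajectory A ω v) (-N) N x.length ∨
        HasGordonRecurrence ℝ (fun n => trajectory A ω v (-n)) (-N) N x.length := by
  obtain ⟨N, hN⟩ := hA.exists_forall_apply_shift_add_length_eq
  refine ⟨N, fun x hx => Or.imp (fun h_left => ?_) (fun h_right => ?_)⟩
  · obtain ⟨t, ht⟩ := exists_trajectory_three_term_of_periodic (v := v) (hN x _ h_left)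
    refine ⟨t, ht (-N) (by lia) (by lia), ?_⟩
    convert ht (N - x.length) (by lia) (by lia) using 3 <;> ring
  · obtain ⟨t, ht⟩ := exists_trajectory_three_term_of_periodic (v := v) (hN x _ h_right)
    refine ⟨t, ?_, ?_⟩
    · rw [add_comm]
      convert ht (N - 2 * x.length) (by lia) (by lia) using 3 <;> ring
    · rw [add_comm]
      convert ht (-N - x.length) (by lia) (by lia) using 3 <;> ring

theorem not_tendsto_trajectory_zero (h_cube : ∀ n : ℕ, ∃ x, n ≤ x.length ∧ HasCubeAroundOrigin ω x)
    (hA : LocConstOn (Set.range fun n => shift n ω) A) (hv : v ≠ 0) :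
    ¬ (Tendsto (trajectory A ω v) atTop (𝓝 0) ∧ Tendsto (trajectory A ω v) atBot (𝓝 0)) := by
  rintro ⟨h_top, h_bot⟩
  obtain ⟨N, hN⟩ := hA.exists_forall_hasGordonRecurrence (v := v)
  have h_freq : ∃ᶠ p : ℤ in atTop, HasGordonRecurrence ℝ (trajectory A ω v) (-N) N p ∨
      HasGordonRecurrence ℝ (fun n => trajectory A ω v (-n)) (-N) N p := by
    refine frequently_atTop.mpr fun m => ?_
    obtain ⟨x, hx, h_occ⟩ := h_cube (max (2 * N) m).toNat
    exact ⟨x.length, by lia, hN x (by lia) h_occ⟩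
  have h_ne (n : ℤ) : trajectory A ω v n ≠ 0 := slAct_ne_zero _ hv
  rcases frequently_or_distrib.mp h_freq with h | h
  · exact (eq_zero_or_eq_zero_of_frequently_hasGordonRecurrence h_top h_bot h).elim
      (h_ne _) (h_ne _)
  · exact (eq_zero_or_eq_zero_of_frequently_hasGordonRecurrence
      (h_bot.comp tendsto_neg_atTop_atBot) (h_top.comp tendsto_neg_atBot_atTop) h).elim
      (h_ne _) (h_ne _)

end Cubes

/-! ### Exponents -/

theorem tendsto_norm_natCast_zero_iff {E : Type*} [SeminormedAddCommGroup E] {u : ℤ → E} :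
    Tendsto (fun n : ℕ => ‖u n‖) atTop (𝓝 0) ↔ Tendsto u atTop (𝓝 0) := by
  rw [tendsto_zero_iff_norm_tendsto_zero (f := u), ← Nat.map_cast_int_atTop, tendsto_map'_iff,
    Function.comp_def]

theorem tendsto_norm_neg_natCast_zero_iff {E : Type*} [SeminormedAddCommGroup E] {u : ℤ → E} :
    Tendsto (fun n : ℕ => ‖u (-n)‖) atTop (𝓝 0) ↔ Tendsto u atBot (𝓝 0) := by
  rw [← tendsto_comp_neg_atTop_iff, tendsto_norm_natCast_zero_iff (u := fun n => u (-n))]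

theorem tendsto_zero_of_limsup_log_div_neg {f : ℕ → ℝ} (hf : ∀ n, 0 ≤ f n)
    (h : limsup (fun n : ℕ => Real.log (f n) / n) atTop < 0) : Tendsto f atTop (𝓝 0) := by
  rw [limsup_eq] at h
  -- A sequence that is not bounded above has `limsup` equal to `sInf ∅ = 0`.
  have h_bdd : {a : ℝ | ∀ᶠ n : ℕ in atTop, Real.log (f n) / n ≤ a}.Nonempty := by
    by_contra! h_empty
    rw [h_empty, Real.sInf_empty] at h
    exact h.false
  obtain ⟨a, ha : ∀ᶠ n : ℕ in atTop, Real.log (f n) / n ≤ a, ha_neg⟩ :=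
    exists_lt_of_csInf_lt h_bdd h
  have h_exp : Tendsto (fun n : ℕ => Real.exp (a * n)) atTop (𝓝 0) :=
    Real.tendsto_exp_atBot.comp (tendsto_natCast_atTop_atTop.const_mul_atTop_of_neg ha_neg)
  refine squeeze_zero' (Eventually.of_forall hf) ?_ h_exp
  filter_upwards [ha, eventually_gt_atTop 0] with n hn hn_pos
  refine Real.le_exp_of_log_le ?_
  rwa [div_le_iff₀ (by exact_mod_cast hn_pos)] at hn

theorem statement9_general {𝒜 : Type*} (ω : ℤ → 𝒜)
    (h_cube : ∀ n : ℕ, ∃ x : List 𝒜, n ≤ x.length ∧ HasCubeAroundOrigin ω x)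
    (A : (ℤ → 𝒜) → SL2) (hA : LocConstOn (Set.range fun n => shift n ω) A)
    (v : EuclideanSpace ℝ (Fin 2)) (hv : v ≠ 0) :
    (¬ (Tendsto (fun n : ℕ => ‖slAct (cocycle A n ω) v‖) atTop (𝓝 0) ∧
        Tendsto (fun n : ℕ => ‖slAct (cocycle A (-(n : ℤ)) ω) v‖) atTop (𝓝 0))) ∧
    ¬ (limsup (fun n : ℕ => Real.log ‖slAct (cocycle A n ω) v‖ / n) atTop < 0 ∧
       limsup (fun n : ℕ => Real.log ‖slAct (cocycle A (-(n : ℤ)) ω) v‖ / n) atTop < 0) := by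
  have h_decay := not_tendsto_trajectory_zero h_cube hA hv
  rw [← tendsto_norm_natCast_zero_iff, ← tendsto_norm_neg_natCast_zero_iff] at h_decay
  refine ⟨h_decay, fun h => h_decay ⟨?_, ?_⟩⟩
  · exact tendsto_zero_of_limsup_log_div_neg (fun _ => norm_nonneg _) h.1
  · exact tendsto_zero_of_limsup_log_div_neg (fun _ => norm_nonneg _) h.2

/-- **Gordon-type argument.** If `ω` begins with cubes `w_k w_k w_k`
around the origin for words of unbounded length, then for any locally constant cocycle
no nonzero vector decays in both time directions; in particular at most one of the two
one-sided exponents is negative. -/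
theorem statement9 {𝒜 : Type*} [Fintype 𝒜] [TopologicalSpace 𝒜] [DiscreteTopology 𝒜]
    {Ω : Set (ℤ → 𝒜)} (hΩ : IsSubshift Ω) (ω : ℤ → 𝒜) (hω : ω ∈ Ω)
    (w : ℕ → List 𝒜) (hlen : Filter.Tendsto (fun k => (w k).length) Filter.atTop Filter.atTop)
    (hocc : ∀ k, occursAt (w k ++ w k ++ w k) ω (-((w k).length : ℤ)) ∨
      occursAt (w k ++ w k ++ w k) ω (-(2 * ((w k).length : ℤ))))
    (A : (ℤ → 𝒜) → SL2) (hA : LocConstOn Ω A)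
    (v : EuclideanSpace ℝ (Fin 2)) (hv : v ≠ 0) :
    (¬ (Filter.Tendsto (fun n : ℕ => ‖slAct (cocycle A n ω) v‖) Filter.atTop (nhds 0) ∧
        Filter.Tendsto (fun n : ℕ => ‖slAct (cocycle A (-(n : ℤ)) ω) v‖) Filter.atTop (nhds 0))) ∧
    ¬ (Filter.limsup (fun n : ℕ => Real.log ‖slAct (cocycle A n ω) v‖ / n) Filter.atTop < 0 ∧
       Filter.limsup (fun n : ℕ => Real.log ‖slAct (cocycle A (-(n : ℤ)) ω) v‖ / n)
         Filter.atTop < 0) := by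
  have h_cube (n : ℕ) : ∃ x, n ≤ x.length ∧ HasCubeAroundOrigin ω x :=
    (hlen.eventually_ge_atTop n).exists.imp' w fun k hk => ⟨hk, hocc k⟩
  exact statement9_general ω h_cube A
    (hA.mono (Set.range_subset_iff.mpr (hΩ.shift_int_mem hω))) v hv
end

section
/- For every B ∈ SL(2,ℝ) and every v ∈ ℝ², max{ ‖B^{−1}v‖, ‖Bv‖, ‖B²v‖ } ≥ ‖v‖/2, where ‖·‖ is the Euclidean norm on ℝ². -/
open Filter Topology MeasureTheory

/-! Writing `t = tr B`, Cayley–Hamilton says that `x₀ = B⁻¹v`, `x₁ = v`, `x₂ = Bv`, `x₃ = B²v`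
satisfy `xₙ₊₁ + xₙ₋₁ = t xₙ`. If `|t| ≥ 1`, the relation at `n = 1` bounds `‖v‖` by
`‖B⁻¹v‖ + ‖Bv‖`; if `|t| ≤ 1`, the relation at `n = 2` bounds it by `‖Bv‖ + ‖B²v‖`. -/

theorem half_seminorm_le_max_of_add_eq_smul {R E : Type*} [SeminormedRing R] [AddCommGroup E]
    [Module R E] (p : Seminorm R E) {t : R} {x₀ x₁ x₂ x₃ : E}
    (h₁ : x₂ + x₀ = t • x₁) (h₂ : x₃ + x₁ = t • x₂) :
    p x₁ / 2 ≤ max (max (p x₀) (p x₂)) (p x₃) := by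
  obtain ht | ht := le_total 1 ‖t‖
  · have hx₁ : p x₁ ≤ p x₂ + p x₀ := calc
      p x₁ ≤ ‖t‖ * p x₁ := le_mul_of_one_le_left (apply_nonneg p x₁) ht
      _ = p (x₂ + x₀) := by rw [h₁, map_smul_eq_mul]
      _ ≤ p x₂ + p x₀ := map_add_le_add p x₂ x₀
    grind
  · have hx₁ : p x₁ ≤ p x₂ + p x₃ := calc
      p x₁ = p (t • x₂ - x₃) := by rw [← h₂, add_sub_cancel_left]
      _ ≤ p (t • x₂) + p x₃ := map_sub_le_add p (t • x₂) x₃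
      _ = ‖t‖ * p x₂ + p x₃ := by rw [map_smul_eq_mul]
      _ ≤ p x₂ + p x₃ := by gcongr; exact mul_le_of_le_one_left (apply_nonneg p x₂) ht
    grind

section SpecialLinearGroup

open Matrix MatrixGroups

variable {R : Type*} [CommRing R]

theorem add_adjugate_fin_two (A : Matrix (Fin 2) (Fin 2) R) :
    A + A.adjugate = A.trace • (1 : Matrix (Fin 2) (Fin 2) R) := by
  ext i j
  fin_cases i <;> fin_cases j <;> simp [adjugate_fin_two, trace_fin_two, add_comm]

theorem smul_add_inv_smul_fin_two (B : SL(2, R)) (v : Fin 2 → R) :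
    B • v + B⁻¹ • v = B.1.trace • v := calc
  B • v + B⁻¹ • v = (B.1 + B.1.adjugate) • v := (add_smul B.1 B.1.adjugate v).symm
  _ = B.1.trace • v := by rw [add_adjugate_fin_two, smul_assoc, one_smul]

theorem sq_smul_add_self_fin_two (B : SL(2, R)) (v : Fin 2 → R) :
    B ^ 2 • v + v = B.1.trace • B • v := by
  rw [← smul_add_inv_smul_fin_two, inv_smul_smul, sq, mul_smul]

end SpecialLinearGroup

theorem statement10_general {R : Type*} [SeminormedCommRing R] (p : Seminorm R (Fin 2 → R))
    (B : Matrix.SpecialLinearGroup (Fin 2) R) (v : Fin 2 → R) :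
    p v / 2 ≤ max (max (p (B⁻¹ • v)) (p (B • v))) (p (B ^ 2 • v)) :=
  half_seminorm_le_max_of_add_eq_smul p (smul_add_inv_smul_fin_two B v)
    (sq_smul_add_self_fin_two B v)

/-- For `B ∈ SL(2,ℝ)` and `v ∈ ℝ²`,
`max{‖B⁻¹v‖, ‖Bv‖, ‖B²v‖} ≥ ‖v‖/2`. -/
theorem statement10 (B : SL2) (v : EuclideanSpace ℝ (Fin 2)) :
    ‖v‖ / 2 ≤ max (max ‖slAct B⁻¹ v‖ ‖slAct B v‖) ‖slAct (B ^ 2) v‖ :=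
  statement10_general ((normSeminorm ℝ (EuclideanSpace ℝ (Fin 2))).comp
    (WithLp.linearEquiv 2 ℝ (Fin 2 → ℝ)).symm.toLinearMap) B v.ofLp
end
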